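/- (Quantitative inverse function theorem.) Let X and Y be Banach spaces, A ⊆ X an open set, ℱ : A → Y continuously Fréchet differentiable, x₀ ∈ A, and η, σ, L > 0. Assume: (1) ‖ℱ(x₀)‖_Y ≤ η, the Fréchet derivative Dℱ(x₀) : X → Y is a bijective bounded linear map, and ‖Dℱ(x₀)⁻¹‖_{L(Y,X)} ≤ σ; (2) the closed ball B̄_X(x₀, 2ησ) is contained in A; (3) ‖Dℱ(x₁) − Dℱ(x₂)‖_{L(X,Y)} ≤ L ‖x₁ − x₂‖_X for all x₁, x₂ ∈ B̄_X(x₀, 2ησ); (4) 2Lσ²η < 1. Then there exists x ∈ X with ℱ(x) = 0 and ‖x − x₀‖_X < 2ησ. -/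

import Mathlib

/-- Quantitative inverse function theorem. -/
theorem quantitative_inverse_function_theorem
    {X Y : Type*} [NormedAddCommGroup X] [NormedSpace ℝ X] [CompleteSpace X]
    [NormedAddCommGroup Y] [NormedSpace ℝ Y] [CompleteSpace Y]
    (A : Set X) (hA : IsOpen A) (F : X → Y) (F' : X → X →L[ℝ] Y)
    (hderiv : ∀ x ∈ A, HasFDerivAt F (F' x) x) (hcont : ContinuousOn F' A)
    (x₀ : X) (hx₀ : x₀ ∈ A) (η σ L : ℝ) (hη : 0 < η) (hσ : 0 < σ) (hL : 0 < L)
    (hres : ‖F x₀‖ ≤ η)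
    (e : X ≃L[ℝ] Y) (he : (e : X →L[ℝ] Y) = F' x₀)
    (hinv : ‖(e.symm : Y →L[ℝ] X)‖ ≤ σ)
    (hball : Metric.closedBall x₀ (2 * η * σ) ⊆ A)
    (hLip : ∀ x₁ ∈ Metric.closedBall x₀ (2 * η * σ),
      ∀ x₂ ∈ Metric.closedBall x₀ (2 * η * σ), ‖F' x₁ - F' x₂‖ ≤ L * ‖x₁ - x₂‖)
    (hcond : 2 * L * σ ^ 2 * η < 1) :
    ∃ x : X, F x = 0 ∧ ‖x - x₀‖ < 2 * η * σ := by
  set r := 2 * η * σ with hr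
  have hrpos : 0 < r := by positivity
  set k := L * σ * r with hk
  have hk0 : 0 ≤ k := by positivity
  have hk1 : k < 1 := by
    rw [hk, hr]; nlinarith
  let T : X → X := fun x => x - e.symm (F x)
  let T' : X → X →L[ℝ] X := fun x => (e.symm : Y →L[ℝ] X).comp (F' x₀ - F' x)
  have hx0b : x₀ ∈ Metric.closedBall x₀ r := Metric.mem_closedBall_self hrpos.le
  have hT : ∀ x ∈ Metric.closedBall x₀ r, HasFDerivAt T (T' x) x := by
    intro x hx
    have h1 := (hasFDerivAt_id (𝕜 := ℝ) x).sub
      ((e.symm : Y →L[ℝ] X).hasFDerivAt.comp x (hderiv x (hball hx)))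
    refine h1.congr_fderiv ?_
    ext v
    simp [T', ← he]
  have hT'n : ∀ x ∈ Metric.closedBall x₀ r, ‖T' x‖ ≤ σ * (L * ‖x - x₀‖) := by
    intro x hx
    refine (ContinuousLinearMap.opNorm_comp_le _ _).trans ?_
    have := hLip x₀ hx0b x hx
    rw [norm_sub_rev x₀ x] at this
    gcongr
  have hT'k : ∀ x ∈ Metric.closedBall x₀ r, ‖T' x‖ ≤ k := by
    intro x hx
    refine (hT'n x hx).trans ?_
    have : ‖x - x₀‖ ≤ r := by simpa [dist_eq_norm] using hx
    calc σ * (L * ‖x - x₀‖) ≤ σ * (L * r) := by gcongr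
      _ = k := by rw [hk]; ring
  have hlip : ∀ x ∈ Metric.closedBall x₀ r, ∀ y ∈ Metric.closedBall x₀ r,
      ‖T y - T x‖ ≤ k * ‖y - x‖ := fun x hx y hy =>
    (convex_closedBall x₀ r).norm_image_sub_le_of_norm_hasFDerivWithin_le
      (fun z hz => (hT z hz).hasFDerivWithinAt) hT'k hx hy
  have hquad : ∀ x ∈ Metric.closedBall x₀ r, ‖T x - T x₀‖ ≤ σ * L * ‖x - x₀‖ ^ 2 / 2 := by
    intro x hx
    have hxr : ‖x - x₀‖ ≤ r := by simpa [dist_eq_norm] using hx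
    have hmem : ∀ t ∈ Set.Icc (0:ℝ) 1, x₀ + t • (x - x₀) ∈ Metric.closedBall x₀ r := by
      intro t ht
      simp only [Metric.mem_closedBall, dist_eq_norm, add_sub_cancel_left, norm_smul,
        Real.norm_eq_abs, abs_of_nonneg ht.1]
      nlinarith [ht.1, ht.2, norm_nonneg (x - x₀)]
    have hg : ∀ t ∈ Set.Icc (0:ℝ) 1, HasDerivAt (fun t : ℝ => T (x₀ + t • (x - x₀)) - T x₀)
        (T' (x₀ + t • (x - x₀)) (x - x₀)) t := by
      intro t ht
      have hl : HasDerivAt (fun t : ℝ => x₀ + t • (x - x₀)) (x - x₀) t := by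
        simpa using ((hasDerivAt_id t).smul_const (x - x₀)).const_add x₀
      exact ((hT _ (hmem t ht)).comp_hasDerivAt t hl).sub_const _
    have hB : ∀ t : ℝ, HasDerivAt (fun t : ℝ => σ * L * ‖x - x₀‖ ^ 2 / 2 * t ^ 2)
        (σ * L * ‖x - x₀‖ ^ 2 * t) t := by
      intro t
      refine ((hasDerivAt_pow 2 t).const_mul (σ * L * ‖x - x₀‖ ^ 2 / 2)).congr_deriv ?_
      push_cast
      ring
    have := image_norm_le_of_norm_deriv_right_le_deriv_boundary (a := 0) (b := 1)
      (fun t ht => (hg t ht).continuousAt.continuousWithinAt)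
      (fun t ht => (hg t ⟨ht.1, ht.2.le⟩).hasDerivWithinAt) (by simp) hB
      (fun t ht => by
        have h1 := hT'n _ (hmem t ⟨ht.1, ht.2.le⟩)
        simp only [add_sub_cancel_left, norm_smul, Real.norm_eq_abs, abs_of_nonneg ht.1] at h1
        calc _ ≤ ‖T' (x₀ + t • (x - x₀))‖ * ‖x - x₀‖ := ContinuousLinearMap.le_opNorm _ _
          _ ≤ (σ * (L * (t * ‖x - x₀‖))) * ‖x - x₀‖ := by gcongr
          _ = _ := by ring)
      (Set.right_mem_Icc.2 zero_le_one)
    simpa using this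
  have hstrict : ∀ x ∈ Metric.closedBall x₀ r, ‖T x - x₀‖ < r := by
    intro x hx
    have hxr : ‖x - x₀‖ ≤ r := by simpa [dist_eq_norm] using hx
    have h0 : ‖T x₀ - x₀‖ ≤ σ * η := by
      have : T x₀ - x₀ = - (e.symm : Y →L[ℝ] X) (F x₀) := by simp [T]
      rw [this, norm_neg]
      refine (ContinuousLinearMap.le_opNorm _ _).trans ?_
      gcongr
    have h2 : σ * L * ‖x - x₀‖ ^ 2 / 2 ≤ σ * L * r ^ 2 / 2 := by gcongr
    have h3 : σ * L * r ^ 2 / 2 = k * r / 2 := by rw [hk]; ring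
    have h4 : k * r < r := by nlinarith
    have h5 := norm_sub_le_norm_sub_add_norm_sub (T x) (T x₀) x₀
    have h6 := hquad x hx
    have h7 : r = 2 * (σ * η) := by rw [hr]; ring
    linarith
  have hmaps : Set.MapsTo T (Metric.closedBall x₀ r) (Metric.closedBall x₀ r) := by
    intro x hx
    simpa [dist_eq_norm] using (hstrict x hx).le
  have hcontr : ContractingWith ⟨k, hk0⟩ (hmaps.restrict T _ _) := by
    refine ⟨by exact_mod_cast hk1, LipschitzWith.of_dist_le_mul fun a b => ?_⟩
    have := hlip b b.2 a a.2
    rw [Subtype.dist_eq, Subtype.dist_eq, dist_eq_norm, dist_eq_norm]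
    exact this
  obtain ⟨y, hy, hfix, -⟩ := hcontr.exists_fixedPoint' Metric.isClosed_closedBall.isComplete
    hmaps hx0b (edist_ne_top _ _)
  have hfix' : T y = y := hfix
  refine ⟨y, ?_, ?_⟩
  · have : e.symm (F y) = 0 := by simpa [T] using hfix'
    simpa using this
  · have := hstrict y hy
    rwa [hfix'] at this
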